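/- arXiv:2410.21463 — 2 statements merged into one kernel-verified Lean document; each statement's English description precedes it below -/
import Mathlib

section
/- Let γ : ℝ → ℝ × ℝ be γ(t) = M(t, t²). Then (1/t)·γ(t) tends to (3,0) as t → 0 from the right and tends to (1,0) as t → 0 from the left; in particular, γ is not differentiable at t = 0. -/
/-- The angular factor `m(x,y) = x/√(x² + y²) + 2` for `(x,y) ≠ (0,0)`, `m(0,0) = 2`. -/
noncomputable def mfun (p : ℝ × ℝ) : ℝ :=
  if p = (0, 0) then 2 else p.1 / Real.sqrt (p.1 ^ 2 + p.2 ^ 2) + 2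

/-- The map `M(x,y) = (x·m(x,y), y·m(x,y))`. -/
noncomputable def Mmap (p : ℝ × ℝ) : ℝ × ℝ :=
  (p.1 * mfun p, p.2 * mfun p)

/-- The parametrization `γ(t) = M(t, t²)` of the image of the parabola. -/
noncomputable def gam (t : ℝ) : ℝ × ℝ := Mmap (t, t ^ 2)

/-!
The map `M` commutes with positive scalings and is continuous off the origin. If `f` is such a map
and `α` is a curve through the origin at time `a` with velocity `v ≠ 0`, then the difference
quotient of `f ∘ α` at `t > a` is `f` of the difference quotient of `α`, hence tends to `f v`,
while for `t < a` a sign has to be pulled through `f` and the limit is `-f (-v)`. For the parabola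
`v = (1, 0)`, where `M (1, 0) = (3, 0)` but `-M (-1, 0) = (1, 0)`.
-/

open Set

/-- Positive homogeneity of degree one: `f` commutes with scaling by positive reals. Scaling by `0`
is not required, as `f 0 = 0` follows. -/
def IsPosHomogeneous {E F : Type*} [SMul ℝ E] [SMul ℝ F] (f : E → F) : Prop :=
  ∀ ⦃c : ℝ⦄, 0 < c → ∀ x, f (c • x) = c • f x

namespace IsPosHomogeneous

section Algebra

variable {E F : Type*} [AddCommGroup E] [Module ℝ E] [AddCommGroup F] [Module ℝ F]
  {f : E → F} {α : ℝ → E} {a t : ℝ}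

theorem map_zero (hf : IsPosHomogeneous f) : f 0 = 0 := by
  have h : f 0 = f 0 + f 0 := by simpa only [smul_zero, two_smul] using hf two_pos 0
  exact left_eq_add.mp h

theorem slope_comp_of_lt (hf : IsPosHomogeneous f) (hα : α a = 0) (ht : a < t) :
    slope (f ∘ α) a t = f (slope α a t) := by
  simp only [slope_def_module, Function.comp_apply, hα, hf.map_zero, sub_zero,
    hf (inv_pos.mpr (sub_pos.mpr ht))]

theorem slope_comp_of_gt (hf : IsPosHomogeneous f) (hα : α a = 0) (ht : t < a) :
    slope (f ∘ α) a t = -f (-slope α a t) := by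
  have hinv : (t - a)⁻¹ = -(a - t)⁻¹ := by rw [← inv_neg, neg_sub]
  simp only [slope_def_module, Function.comp_apply, hα, hf.map_zero, sub_zero, hinv, neg_smul,
    neg_neg, hf (inv_pos.mpr (sub_pos.mpr ht))]

end Algebra

variable {E F : Type*} [NormedAddCommGroup E] [NormedSpace ℝ E] [NormedAddCommGroup F]
  [NormedSpace ℝ F] {f : E → F} {α : ℝ → E} {a : ℝ} {v : E}

theorem hasDerivWithinAt_comp_Ioi (hf : IsPosHomogeneous f) (hfv : ContinuousAt f v)
    (hα : α a = 0) (hv : HasDerivWithinAt α v (Ioi a) a) :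
    HasDerivWithinAt (f ∘ α) (f v) (Ioi a) a := by
  rw [hasDerivWithinAt_iff_tendsto_slope' self_notMem_Ioi] at hv ⊢
  refine (hfv.tendsto.comp hv).congr' ?_
  filter_upwards [self_mem_nhdsWithin] with t ht using (hf.slope_comp_of_lt hα ht).symm

theorem hasDerivWithinAt_comp_Iio (hf : IsPosHomogeneous f) (hfv : ContinuousAt f (-v))
    (hα : α a = 0) (hv : HasDerivWithinAt α v (Iio a) a) :
    HasDerivWithinAt (f ∘ α) (-f (-v)) (Iio a) a := by
  rw [hasDerivWithinAt_iff_tendsto_slope' self_notMem_Iio] at hv ⊢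
  refine (hfv.tendsto.comp hv.neg).neg.congr' ?_
  filter_upwards [self_mem_nhdsWithin] with t ht using (hf.slope_comp_of_gt hα ht).symm

end IsPosHomogeneous

theorem slope_zero_of_map_zero {k F : Type*} [Field k] [AddCommGroup F] [Module k F] {g : k → F}
    (hg : g 0 = 0) : slope g 0 = fun t ↦ (1 / t) • g t := by
  ext1 t
  rw [slope_def_module, hg, sub_zero, sub_zero, one_div]

theorem not_differentiableAt_of_hasDerivWithinAt_Ioi_Iio {F : Type*} [NormedAddCommGroup F]
    [NormedSpace ℝ F] {g : ℝ → F} {a : ℝ} {u w : F} (hu : HasDerivWithinAt g u (Ioi a) a)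
    (hw : HasDerivWithinAt g w (Iio a) a) (huw : u ≠ w) : ¬ DifferentiableAt ℝ g a := by
  intro hg
  have hderiv_u : deriv g a = u :=
    (uniqueDiffWithinAt_Ioi a).eq_deriv _ hg.hasDerivAt.hasDerivWithinAt hu
  have hderiv_w : deriv g a = w :=
    (uniqueDiffWithinAt_Iio a).eq_deriv _ hg.hasDerivAt.hasDerivWithinAt hw
  exact huw (hderiv_u.symm.trans hderiv_w)

-- At the origin the quotient is `0 / 0 = 0`, which matches the value `m(0,0) = 2`.
theorem mfun_eq_div_sqrt_add_two (p : ℝ × ℝ) :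
    mfun p = p.1 / √(p.1 ^ 2 + p.2 ^ 2) + 2 := by
  unfold mfun
  split_ifs with hp
  · simp [hp]
  · rfl

theorem mfun_smul {c : ℝ} (hc : 0 < c) (p : ℝ × ℝ) : mfun (c • p) = mfun p := by
  have hsqrt : √((c * p.1) ^ 2 + (c * p.2) ^ 2) = c * √(p.1 ^ 2 + p.2 ^ 2) := by
    rw [mul_pow, mul_pow, ← mul_add, Real.sqrt_mul (sq_nonneg c), Real.sqrt_sq hc.le]
  simp only [mfun_eq_div_sqrt_add_two, Prod.smul_fst, Prod.smul_snd, smul_eq_mul, hsqrt,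
    mul_div_mul_left _ _ hc.ne']

theorem continuousAt_mfun {p : ℝ × ℝ} (hp : p ≠ 0) : ContinuousAt mfun p := by
  have hsum : p.1 ^ 2 + p.2 ^ 2 ≠ 0 := fun h ↦ by
    obtain ⟨hfst, hsnd⟩ := (add_eq_zero_iff_of_nonneg (sq_nonneg _) (sq_nonneg _)).mp h
    exact hp (Prod.ext (sq_eq_zero_iff.mp hfst) (sq_eq_zero_iff.mp hsnd))
  have hsqrt : √(p.1 ^ 2 + p.2 ^ 2) ≠ 0 := (Real.sqrt_ne_zero (by positivity)).mpr hsum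
  rw [funext mfun_eq_div_sqrt_add_two]
  fun_prop (disch := exact hsqrt)

theorem isPosHomogeneous_Mmap : IsPosHomogeneous Mmap := fun c hc p ↦ by
  simp only [Mmap, mfun_smul hc, Prod.smul_fst, Prod.smul_snd, Prod.smul_mk, smul_eq_mul,
    mul_assoc]

theorem continuousAt_Mmap {p : ℝ × ℝ} (hp : p ≠ 0) : ContinuousAt Mmap p := by
  have hm := continuousAt_mfun hp
  unfold Mmap
  fun_prop

theorem Mmap_one_zero : Mmap (1, 0) = (3, 0) := by
  norm_num [Mmap, mfun_eq_div_sqrt_add_two]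

theorem Mmap_neg_one_zero : Mmap (-1, 0) = (-1, 0) := by
  norm_num [Mmap, mfun_eq_div_sqrt_add_two]

theorem hasDerivAt_parabola_zero : HasDerivAt (fun t : ℝ ↦ (t, t ^ 2)) (1, 0) 0 := by
  simpa using (hasDerivAt_id (0 : ℝ)).prodMk (hasDerivAt_pow 2 (0 : ℝ))

theorem hasDerivWithinAt_gam_Ioi : HasDerivWithinAt gam (3, 0) (Ioi 0) 0 := by
  rw [← Mmap_one_zero]
  exact isPosHomogeneous_Mmap.hasDerivWithinAt_comp_Ioi (continuousAt_Mmap (by simp)) (by simp)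
    hasDerivAt_parabola_zero.hasDerivWithinAt

theorem hasDerivWithinAt_gam_Iio : HasDerivWithinAt gam (1, 0) (Iio 0) 0 := by
  have hvalue : -Mmap (-(1, 0)) = (1, 0) := by simp [Mmap_neg_one_zero]
  rw [← hvalue]
  exact isPosHomogeneous_Mmap.hasDerivWithinAt_comp_Iio (continuousAt_Mmap (by simp)) (by simp)
    hasDerivAt_parabola_zero.hasDerivWithinAt

theorem gam_zero : gam 0 = 0 := by
  simp [gam, Mmap]

/-- `(1/t)·γ(t) → (3,0)` as `t → 0⁺` and `(1/t)·γ(t) → (1,0)` as `t → 0⁻`;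
in particular `γ` is not differentiable at `0`. -/
theorem stmt7 :
    Filter.Tendsto (fun t : ℝ => (1 / t) • gam t) (nhdsWithin 0 (Set.Ioi 0))
      (nhds ((3 : ℝ), (0 : ℝ))) ∧
    Filter.Tendsto (fun t : ℝ => (1 / t) • gam t) (nhdsWithin 0 (Set.Iio 0))
      (nhds ((1 : ℝ), (0 : ℝ))) ∧
    ¬ DifferentiableAt ℝ gam 0 := by
  rw [← slope_zero_of_map_zero gam_zero]
  exact ⟨(hasDerivWithinAt_iff_tendsto_slope' self_notMem_Ioi).mp hasDerivWithinAt_gam_Ioi,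
    (hasDerivWithinAt_iff_tendsto_slope' self_notMem_Iio).mp hasDerivWithinAt_gam_Iio,
    not_differentiableAt_of_hasDerivWithinAt_Ioi_Iio hasDerivWithinAt_gam_Ioi
      hasDerivWithinAt_gam_Iio (by simp)⟩
end

section
/- Let γ : ℝ → ℝ × ℝ be γ(t) = M(t, t²). Then there exist δ > 0 and a continuously differentiable function h : ℝ → ℝ (C¹ on all of ℝ) with h(0) = 0 and h'(0) = 0 such that for every t with |t| < δ, the point γ(t) lies on the graph of h, i.e. (γ(t)).2 = h((γ(t)).1). (Thus the image under M of the parabola y = x² is, near the origin, the graph of a C¹ function, even though by the curvature jump it is not the graph of any C² function.) -/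
/-!
The map `M` preserves lines through the origin, so `γ₂(t) = t γ₁(t)`. On the line of slope `s`, the
factor `m` is constant on each side of the origin, equal to `2 ± cos (arctan s)`; hence
`γ₁(t) = 2 t ± sin (arctan t)`, the sign being that of `t`. For either sign,
`t ↦ 2 t ± sin (arctan t)` is a diffeomorphism of `ℝ`, with inverse `g±`, say. As `γ₁(t)` and `t`
have the same sign, the curve is the graph of `x ↦ x g±(x)`, the sign being that of `x`. Although
`g₊` and `g₋` have different derivatives at `0`, both vanish there, so `x g₊(x)` and `x g₋(x)` both
have value and derivative `0` at `0` and fit together in a `C¹` way.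
-/

open Filter Real

section Calculus

theorem hasDerivAt_sub_smul {𝕜 E : Type*} [NontriviallyNormedField 𝕜] [NormedAddCommGroup E]
    [NormedSpace 𝕜 E] {g : 𝕜 → E} {a : 𝕜} (hg : ContinuousAt g a) :
    HasDerivAt (fun x ↦ (x - a) • g x) (g a) a := by
  rw [hasDerivAt_iff_tendsto_slope]
  refine (hg.tendsto.mono_left nhdsWithin_le_nhds).congr' ?_
  filter_upwards [self_mem_nhdsWithin] with x hx
  exact (slope_sub_smul g (Ne.symm hx)).symm

theorem exists_homeomorph_contDiff_symm_of_deriv_pos {f : ℝ → ℝ} {n : WithTop ℕ∞}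
    (hf : ContDiff ℝ n f) (hf' : ∀ x, 0 < deriv f x) (hsurj : Function.Surjective f) :
    ∃ e : ℝ ≃ₜ ℝ, ⇑e = f ∧ ContDiff ℝ n e.symm := by
  let e : ℝ ≃ₜ ℝ := ((strictMono_of_deriv_pos hf').orderIsoOfSurjective f hsurj).toHomeomorph
  have hderiv (x : ℝ) : HasDerivAt e (deriv f x) x :=
    (differentiableAt_of_deriv_ne_zero (hf' x).ne').hasDerivAt
  exact ⟨e, rfl, e.contDiff_symm_deriv (fun x ↦ (hf' x).ne') hderiv hf⟩

variable {E : Type*} [NormedAddCommGroup E] [NormedSpace ℝ E] {u v : ℝ → E} {a : ℝ}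

theorem hasDerivAt_ite_le_self {u' : E} (hu : HasDerivAt u u' a) (hv : HasDerivAt v u' a)
    (huv : u a = v a) : HasDerivAt (fun x ↦ if x ≤ a then u x else v x) u' a := by
  have hleft : HasDerivWithinAt (fun x ↦ if x ≤ a then u x else v x) u' (Set.Iic a) a :=
    hu.hasDerivWithinAt.congr (fun x hx ↦ if_pos hx) (if_pos le_rfl)
  have hright : HasDerivWithinAt (fun x ↦ if x ≤ a then u x else v x) u' (Set.Ioi a) a :=
    hv.hasDerivWithinAt.congr (fun x hx ↦ if_neg (not_le.2 hx)) ((if_pos le_rfl).trans huv)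
  simpa only [Set.Iic_union_Ioi, hasDerivWithinAt_univ] using hleft.union hright

theorem hasDerivAt_ite_le (hu : Differentiable ℝ u) (hv : Differentiable ℝ v) (huv : u a = v a)
    (huv' : deriv u a = deriv v a) (x : ℝ) :
    HasDerivAt (fun x ↦ if x ≤ a then u x else v x)
      (if x ≤ a then deriv u x else deriv v x) x := by
  rcases lt_trichotomy x a with hx | rfl | hx
  · rw [if_pos hx.le]
    refine (hu x).hasDerivAt.congr_of_eventuallyEq ?_
    filter_upwards [Iio_mem_nhds hx] with y hy using if_pos (le_of_lt hy)
  · rw [if_pos le_rfl]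
    exact hasDerivAt_ite_le_self (hu x).hasDerivAt (huv' ▸ (hv x).hasDerivAt) huv
  · rw [if_neg hx.not_ge]
    refine (hv x).hasDerivAt.congr_of_eventuallyEq ?_
    filter_upwards [Ioi_mem_nhds hx] with y hy using if_neg (not_le.2 hy)

theorem contDiff_one_ite_le (hu : ContDiff ℝ 1 u) (hv : ContDiff ℝ 1 v) (huv : u a = v a)
    (huv' : deriv u a = deriv v a) : ContDiff ℝ 1 (fun x ↦ if x ≤ a then u x else v x) := by
  have hderiv := hasDerivAt_ite_le (hu.differentiable one_ne_zero) (hv.differentiable one_ne_zero)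
    huv huv'
  refine contDiff_one_iff_deriv.2 ⟨fun x ↦ (hderiv x).differentiableAt, ?_⟩
  rw [funext fun x ↦ (hderiv x).deriv]
  refine (hu.continuous_deriv le_rfl).if_le (hv.continuous_deriv le_rfl) continuous_id
    continuous_const ?_
  rintro x rfl
  exact huv'

end Calculus

/-- For `c = ±1`, the smooth function of `t` that agrees with the abscissa of `γ` where `t` has
the sign of `c`; `sin (arctan t)` is `t / √(1 + t ^ 2)`. -/
noncomputable def gamFstBranch (c t : ℝ) : ℝ := 2 * t + c * sin (arctan t)

namespace gamFstBranch

theorem zero_right (c : ℝ) : gamFstBranch c 0 = 0 := by simp [gamFstBranch]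

theorem contDiff (c : ℝ) {n : WithTop ℕ∞} : ContDiff ℝ n (gamFstBranch c) :=
  (contDiff_const.mul contDiff_id).add (contDiff_const.mul (contDiff_sin.comp contDiff_arctan))

theorem hasDerivAt (c t : ℝ) :
    HasDerivAt (gamFstBranch c) (2 + c * (cos (arctan t) * (1 / (1 + t ^ 2)))) t := by
  have hlinear : HasDerivAt (fun t : ℝ ↦ 2 * t) 2 t := by
    simpa using (hasDerivAt_id t).const_mul 2
  exact hlinear.add ((hasDerivAt_arctan t).sin.const_mul c)

theorem deriv_pos {c : ℝ} (hc : |c| < 2) (t : ℝ) : 0 < deriv (gamFstBranch c) t := by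
  rw [(hasDerivAt c t).deriv]
  have hcos : |cos (arctan t) * (1 / (1 + t ^ 2))| ≤ 1 := by
    rw [abs_mul, abs_of_nonneg (by positivity : 0 ≤ 1 / (1 + t ^ 2))]
    refine mul_le_one₀ (abs_cos_le_one _) (by positivity) ?_
    exact div_le_one_of_le₀ (by nlinarith) (by positivity)
  have hbound : |c * (cos (arctan t) * (1 / (1 + t ^ 2)))| ≤ |c| := by
    rw [abs_mul]
    exact mul_le_of_le_one_right (abs_nonneg c) hcos
  linarith [neg_abs_le (c * (cos (arctan t) * (1 / (1 + t ^ 2))))]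

theorem surjective (c : ℝ) : Function.Surjective (gamFstBranch c) := by
  have hbound (t : ℝ) : |c * sin (arctan t)| ≤ |c| := by
    rw [abs_mul]
    exact mul_le_of_le_one_right (abs_nonneg c) (abs_sin_le_one _)
  refine (contDiff c (n := 0)).continuous.surjective ?_ ?_
  · exact tendsto_atTop_add_right_of_le _ (-|c|) (tendsto_id.const_mul_atTop two_pos)
      fun t ↦ (abs_le.1 (hbound t)).1
  · exact tendsto_atBot_add_right_of_ge _ |c| (tendsto_id.const_mul_atBot two_pos)
      fun t ↦ (abs_le.1 (hbound t)).2

theorem exists_contDiff_leftInverse {c : ℝ} (hc : |c| < 2) {n : WithTop ℕ∞} :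
    ∃ g : ℝ → ℝ, ContDiff ℝ n g ∧ Function.LeftInverse g (gamFstBranch c) := by
  obtain ⟨e, he, hsymm⟩ :=
    exists_homeomorph_contDiff_symm_of_deriv_pos (contDiff c) (deriv_pos hc) (surjective c)
  exact ⟨e.symm, hsymm, he ▸ e.symm_apply_apply⟩

theorem hasDerivAt_mul_leftInverse {g : ℝ → ℝ} {c : ℝ} (hg : ContinuousAt g 0)
    (hg_inv : Function.LeftInverse g (gamFstBranch c)) : HasDerivAt (fun x ↦ x * g x) 0 0 := by
  have hg0 : g 0 = 0 := by simpa only [zero_right] using hg_inv 0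
  simpa [hg0] using hasDerivAt_sub_smul hg

end gamFstBranch

theorem mfun_pos (p : ℝ × ℝ) : 0 < mfun p := by
  unfold mfun
  split_ifs
  · exact two_pos
  · have hnorm : |p.1| ≤ √(p.1 ^ 2 + p.2 ^ 2) := abs_le_sqrt (by linarith [sq_nonneg p.2])
    have hratio : |p.1 / √(p.1 ^ 2 + p.2 ^ 2)| ≤ 1 := by
      rw [abs_div, abs_of_nonneg (sqrt_nonneg _)]
      exact div_le_one_of_le₀ hnorm (sqrt_nonneg _)
    linarith [(abs_le.1 hratio).1]

theorem mfun_mk_mul (t s : ℝ) :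
    mfun (t, t * s) = 2 + SignType.sign t * cos (arctan s) := by
  rcases eq_or_ne t 0 with rfl | ht
  · simp [mfun]
  · have hnorm : √(t ^ 2 + (t * s) ^ 2) = |t| * √(1 + s ^ 2) := by
      rw [← sqrt_sq_eq_abs, ← sqrt_mul (sq_nonneg t)]
      ring_nf
    have hsign : t / |t| = SignType.sign t :=
      (div_eq_iff (abs_ne_zero.2 ht)).2 (sign_mul_abs t).symm
    simp only [mfun, Prod.mk.injEq, ht, false_and, if_false, hnorm]
    rw [← div_div, hsign, cos_arctan, add_comm, mul_one_div]

theorem gam_fst (t : ℝ) : (gam t).1 = gamFstBranch (SignType.sign t) t := by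
  have hsin : t * cos (arctan t) = sin (arctan t) := by
    rw [cos_arctan, sin_arctan, mul_one_div]
  simp only [gam, Mmap, sq t, mfun_mk_mul, gamFstBranch, ← hsin]
  ring

theorem gam_fst_of_nonpos {t : ℝ} (ht : t ≤ 0) : (gam t).1 = gamFstBranch (-1) t := by
  rcases ht.eq_or_lt with rfl | ht
  · simp only [gam_fst, gamFstBranch.zero_right]
  · simp [gam_fst, sign_neg ht]

theorem gam_fst_of_nonneg {t : ℝ} (ht : 0 ≤ t) : (gam t).1 = gamFstBranch 1 t := by
  rcases ht.eq_or_lt with rfl | ht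
  · simp only [gam_fst, gamFstBranch.zero_right]
  · simp [gam_fst, sign_pos ht]

theorem gam_fst_nonpos_iff {t : ℝ} : (gam t).1 ≤ 0 ↔ t ≤ 0 := by
  simpa only [gam, Mmap, not_lt] using (mul_pos_iff_of_pos_right (mfun_pos (t, t ^ 2))).not

theorem gam_snd (t : ℝ) : (gam t).2 = (gam t).1 * t := by
  simp only [gam, Mmap]
  ring

theorem stmt10_general :
    ∃ h : ℝ → ℝ, ContDiff ℝ 1 h ∧ h 0 = 0 ∧ deriv h 0 = 0 ∧
      ∀ t : ℝ, (gam t).2 = h ((gam t).1) := by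
  obtain ⟨u, hu, hu_inv⟩ :=
    gamFstBranch.exists_contDiff_leftInverse (c := -1) (n := 1) (by norm_num)
  obtain ⟨v, hv, hv_inv⟩ :=
    gamFstBranch.exists_contDiff_leftInverse (c := 1) (n := 1) (by norm_num)
  have hu' := gamFstBranch.hasDerivAt_mul_leftInverse hu.continuous.continuousAt hu_inv
  have hv' := gamFstBranch.hasDerivAt_mul_leftInverse hv.continuous.continuousAt hv_inv
  refine ⟨fun x ↦ if x ≤ 0 then x * u x else x * v x,
    contDiff_one_ite_le (contDiff_id.mul hu) (contDiff_id.mul hv) (by simp)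
      (hu'.deriv.trans hv'.deriv.symm),
    by simp, (hasDerivAt_ite_le_self hu' hv' (by simp)).deriv, fun t ↦ ?_⟩
  simp only [gam_fst_nonpos_iff, gam_snd]
  split_ifs with ht
  · rw [gam_fst_of_nonpos ht, hu_inv]
  · rw [gam_fst_of_nonneg (not_le.1 ht).le, hv_inv]

/-- Near the origin, the image of the parabola under `M` is the graph of a `C¹`
function `h` with `h(0) = 0` and `h'(0) = 0`. -/
theorem stmt10 :
    ∃ δ : ℝ, 0 < δ ∧ ∃ h : ℝ → ℝ, ContDiff ℝ 1 h ∧ h 0 = 0 ∧ deriv h 0 = 0 ∧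
      ∀ t : ℝ, |t| < δ → (gam t).2 = h ((gam t).1) := by
  obtain ⟨h, hC1, h0, h0', hgraph⟩ := stmt10_general
  exact ⟨1, one_pos, h, hC1, h0, h0', fun t _ ↦ hgraph t⟩
end
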